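/- arXiv:2507.08796 — 2 statements merged into one kernel-verified Lean document; each statement's English description precedes it below -/
import Mathlib

section
/- For every natural number k ≥ 1, the number of k-NFEs is exactly 2 * 3^(k-1); that is, the collection of natural filter-equivariant polymorphic list functions f with (f Unit [()]).length = k has cardinality 2 * 3^(k-1) (where two such functions are identified when they agree at every type on every list). -/
/-- A function `f : List α → List α` is filter-equivariant if it commutes with
`List.filter p` for every Boolean predicate `p`. -/
def FilterEquivariant {α : Type} (f : List α → List α) : Prop :=
  ∀ (p : α → Bool) (xs : List α), f (xs.filter p) = (f xs).filter p

/-- A polymorphic list function is natural (map-equivariant) if it commutes with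
`List.map g` for every `g`. -/
def Natural (f : ∀ α : Type, List α → List α) : Prop :=
  ∀ (α β : Type) (g : α → β) (xs : List α), f β (xs.map g) = (f α xs).map g

/-- A polymorphic list function is natural filter-equivariant (NFE) if it is natural
and each component is filter-equivariant. -/
def NFE (f : ∀ α : Type, List α → List α) : Prop :=
  Natural f ∧ ∀ α : Type, FilterEquivariant (f α)

/-!
Among the NFEs are the *blocks*, which repeat every element of the list, or of its reversal, a
fixed positive number of times, and the concatenations of blocks. These are all.

Write `0, 1` for `false, true` on `Bool`. A list is recovered from its restrictions to pairs of
letters, so an NFE `f` is determined by the word `f [0, 1]`, and `g` is pointwise a prefix of `f`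
as soon as `g [0, 1]` is a prefix of `f [0, 1]`. If that word starts with exactly `m > 0` zeros,
cut `f [0, 1, 2]` just before its first `2`: restricting to `{0, 2}` and to `{1, 2}` shows that
the part cut off contains `m` zeros and `m` ones, and restricting to `{0, 1}` shows that it is
`0ᵐ1ᵐ` and a prefix of `f [0, 1]`. So a block is a prefix of `f`; the other first letter is
handled by reversal. What remains after removing the block is again an NFE, and one recurses. The
sequence of blocks can be read off `f [0, 1]`, and counting `k`-NFEs becomes counting sequences of
directed blocks of total multiplicity `k`.
-/

section Lists

variable {α : Type*}

theorem isPrefix_of_forall_filter_pair [DecidableEq α] : ∀ {l l' : List α},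
    (∀ a b, l.filter (fun x => x = a ∨ x = b) <+: l'.filter (fun x => x = a ∨ x = b)) → l <+: l'
  | [], _, _ => List.nil_prefix
  | a :: _, [], h => by simpa using h a a
  | a :: l, a' :: l', h => by
    obtain rfl : a = a' := by
      have := h a a'
      simp only [List.filter_cons, true_or, or_true, decide_true, if_true] at this
      exact (List.cons_prefix_cons.1 this).1
    refine List.cons_prefix_cons.2 ⟨rfl, isPrefix_of_forall_filter_pair fun b c => ?_⟩
    have := h b c
    by_cases ha : a = b ∨ a = c <;> simpa [List.filter_cons, ha] using this

theorem exists_eq_map_filter_of_length_le_two [Nonempty α] :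
    ∀ {l : List α}, l.length ≤ 2 →
      ∃ (p : Bool → Bool) (u : Bool → α), l = ([false, true].filter p).map u
  | [], _ => ⟨fun _ => false, fun _ => Classical.arbitrary α, rfl⟩
  | [a], _ => ⟨fun b => b, fun _ => a, rfl⟩
  | [a, b], _ => ⟨fun _ => true, fun i => cond i b a, rfl⟩
  | _ :: _ :: _ :: _, h => by simp at h

theorem length_filter_pair_le_two [DecidableEq α] {l : List α} (hl : l.Nodup) (a b : α) :
    (l.filter fun x => x = a ∨ x = b).length ≤ 2 :=
  have hsubset : (l.filter fun x => x = a ∨ x = b) ⊆ [a, b] := fun x hx => by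
    simpa using (List.mem_filter.1 hx).2
  ((hl.filter _).subperm hsubset).length_le

theorem filter_takeWhile_of_imp {p q : α → Bool} (h : ∀ x, q x = false → p x = true)
    (l : List α) : (l.takeWhile q).filter p = (l.filter p).takeWhile q := by
  rw [List.takeWhile_filter]
  congr 2 with x
  cases hq : q x <;> simp [h x, hq]

theorem takeWhile_not_eq_replicate (w : List Bool) :
    w.takeWhile (! ·) = List.replicate (w.takeWhile (! ·)).length false :=
  List.eq_replicate_of_mem fun b hb => by simpa using List.mem_takeWhile_imp hb

theorem eq_replicate_append_replicate_of_isPrefix {w v : List Bool} {m : ℕ}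
    (hw : List.replicate m false <+: w) (hv : v <+: w) (hcount : ∀ b, v.count b = m) :
    v = List.replicate m false ++ List.replicate m true := by
  have hlen : (List.replicate m false).length ≤ v.length := by
    simpa [hcount] using v.count_le_length (a := false)
  obtain ⟨r, rfl⟩ := List.prefix_of_prefix_length_le hw hv hlen
  have hfalse : r.count false = 0 := by simpa using hcount false
  have htrue : r.count true = m := by simpa [List.count_replicate] using hcount true
  have hr : r = List.replicate r.length true :=
    List.eq_replicate_of_mem fun b hb =>
      Bool.eq_true_of_not_eq_false fun h => List.count_eq_zero.1 hfalse (h ▸ hb)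
  rw [hr, List.count_replicate_self] at htrue
  rw [hr, htrue]

end Lists

namespace NFE

variable {α β : Type} {f g : ∀ α : Type, List α → List α}

theorem filter_eq_map (hf : NFE f) {p : α → Bool} {u : β → α} {xs : List α} {ys : List β}
    (h : xs.filter p = ys.map u) : (f α xs).filter p = (f β ys).map u := by
  rw [← hf.2, h, hf.1]

theorem nil : NFE fun _ _ => [] :=
  ⟨fun _ _ _ _ => rfl, fun _ _ _ => rfl⟩

theorem append (hf : NFE f) (hg : NFE g) : NFE fun α xs => f α xs ++ g α xs :=
  ⟨fun α β u xs => by simp only [hf.1 α β, hg.1 α β, List.map_append],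
    fun α p xs => by simp only [hf.2 α p, hg.2 α p, List.filter_append]⟩

theorem comp_reverse (hf : NFE f) : NFE fun α xs => f α xs.reverse :=
  ⟨fun α β u xs => by simp only [← List.map_reverse, hf.1 α β],
    fun α p xs => by simp only [← List.filter_reverse, hf.2 α p]⟩

theorem exists_append_of_isPrefix (hf : NFE f) (hg : NFE g)
    (h : ∀ α xs, g α xs <+: f α xs) :
    ∃ r : ∀ α : Type, List α → List α, NFE r ∧ ∀ α xs, f α xs = g α xs ++ r α xs := by
  choose r hr using h
  refine ⟨r, ⟨fun α β u xs => ?_, fun α p xs => ?_⟩, fun α xs => (hr α xs).symm⟩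
  · have := hf.1 α β u xs
    rwa [← hr, ← hr, hg.1, List.map_append, List.append_cancel_left_eq] at this
  · have := hf.2 α p xs
    rwa [← hr, ← hr, hg.2, List.filter_append, List.append_cancel_left_eq] at this

theorem isPrefix_of_isPrefix_bool (hf : NFE f) (hg : NFE g)
    (h : f Bool [false, true] <+: g Bool [false, true]) (α : Type) (xs : List α) :
    f α xs <+: g α xs := by
  suffices hfin : ∀ n, f (Fin n) (List.finRange n) <+: g (Fin n) (List.finRange n) by
    rw [← List.map_get_finRange xs, hf.1, hg.1]
    exact (hfin _).map _
  intro n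
  refine isPrefix_of_forall_filter_pair fun a b => ?_
  have : Nonempty (Fin n) := ⟨a⟩
  obtain ⟨p, u, hpu⟩ := exists_eq_map_filter_of_length_le_two
    (length_filter_pair_le_two (List.nodup_finRange n) a b)
  rw [← hf.2, ← hg.2, hpu, hf.1, hg.1, hf.2, hg.2]
  exact (h.filter p).map u

/-- The NFE repeating every element of a list `m` times in place. -/
def stretch (m : ℕ) (α : Type) (xs : List α) : List α :=
  xs.flatMap (List.replicate m)

theorem nfe_stretch (m : ℕ) : NFE (stretch m) := by
  refine ⟨fun α β u xs => ?_, fun α p xs => ?_⟩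
  · simp only [stretch, List.flatMap_map, List.map_flatMap, List.map_replicate]
  · simp only [stretch, List.filter_flatMap]
    induction xs with
    | nil => rfl
    | cons x xs ih => cases hx : p x <;> simp [hx, ih, List.filter_replicate]

/-- The basic NFE encoded by the pair `q`: it repeats every element `q.2 + 1` times in place, the
shift by one ruling out empty blocks, after reversing the list if `q.1 = true`. -/
def block (q : Bool × ℕ) (α : Type) (xs : List α) : List α :=
  stretch (q.2 + 1) α (bif q.1 then xs.reverse else xs)

theorem nfe_block : ∀ q : Bool × ℕ, NFE (block q)
  | (false, m) => nfe_stretch (m + 1)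
  | (true, m) => (nfe_stretch (m + 1)).comp_reverse

theorem block_bool (b : Bool) (m : ℕ) :
    block (b, m) Bool [false, true] = List.replicate (m + 1) b ++ List.replicate (m + 1) !b := by
  cases b <;> simp [block, stretch]

/-- The concatenation of a sequence of blocks: the normal form of an NFE. -/
def ofBlocks : List (Bool × ℕ) → ∀ α : Type, List α → List α
  | [], _, _ => []
  | q :: c, α, xs => block q α xs ++ ofBlocks c α xs

theorem nfe_ofBlocks : ∀ c, NFE (ofBlocks c)
  | [] => nil
  | q :: c => (nfe_block q).append (nfe_ofBlocks c)

/-- The total multiplicity of a sequence of blocks: the `k` for which `ofBlocks c` is a `k`-NFE. -/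
def size (c : List (Bool × ℕ)) : ℕ :=
  (c.map fun q => q.2 + 1).sum

theorem size_cons (q : Bool × ℕ) (c : List (Bool × ℕ)) : size (q :: c) = q.2 + 1 + size c :=
  List.sum_cons

theorem length_ofBlocks_unit (c : List (Bool × ℕ)) : (ofBlocks c Unit [()]).length = size c := by
  induction c with
  | nil => rfl
  | cons q c ih =>
    rcases q with ⟨_ | _, m⟩ <;> simp [ofBlocks, size_cons, block, stretch, ih]

theorem takeWhile_ofBlocks_cons_bool (b : Bool) (m : ℕ) (c : List (Bool × ℕ)) :
    (ofBlocks ((b, m) :: c) Bool [false, true]).takeWhile (· = b) = List.replicate (m + 1) b := by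
  simp only [ofBlocks, block_bool, List.append_assoc]
  rw [List.takeWhile_append_of_pos (by simp)]
  simp [List.replicate_succ]

theorem ofBlocks_bool_injective :
    Function.Injective fun c => ofBlocks c Bool [false, true] := by
  intro c
  induction c with
  | nil =>
    rintro (_ | ⟨⟨b, m⟩, c'⟩) h
    · rfl
    · simp [ofBlocks, block_bool, List.replicate_succ] at h
  | cons q c ih =>
    obtain ⟨b, m⟩ := q
    rintro (_ | ⟨⟨b', m'⟩, c'⟩) h
    · simp [ofBlocks, block_bool, List.replicate_succ] at h
    obtain rfl : b = b' := by
      simpa [ofBlocks, block_bool, List.replicate_succ] using congrArg List.head? h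
    obtain rfl : m = m' := by
      simpa only [takeWhile_ofBlocks_cons_bool, List.length_replicate, add_left_inj] using
        congrArg (fun w => (w.takeWhile (· = b)).length) h
    rw [ih (List.append_cancel_left h)]

theorem count_takeWhile_ne_two (hf : NFE f) (b : Bool) :
    ((f (Fin 3) [0, 1, 2]).takeWhile (· ≠ 2)).count (cond b 1 0) =
      ((f Bool [false, true]).takeWhile (! ·)).length := by
  have hfilter : (f (Fin 3) [0, 1, 2]).filter (· ≠ cond b 0 1) =
      (f Bool [false, true]).map (cond · 2 (cond b 1 0)) :=
    hf.filter_eq_map (by cases b <;> rfl)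
  have hfirst : (fun i : Fin 3 => decide (i ≠ 2)) ∘ (cond · 2 (cond b 1 0)) = (! ·) := by
    funext c
    cases b <;> cases c <;> rfl
  rw [← List.count_filter (p := (· ≠ cond b 0 1)) (by cases b <;> decide),
    filter_takeWhile_of_imp (by cases b <;> decide), hfilter, List.takeWhile_map, hfirst,
    takeWhile_not_eq_replicate, List.map_replicate]
  simp

theorem stretch_isPrefix_bool (hf : NFE f) :
    stretch ((f Bool [false, true]).takeWhile (! ·)).length Bool [false, true] <+:
      f Bool [false, true] := by
  set w := f Bool [false, true] with hw
  let W := f (Fin 3) [0, 1, 2]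
  let ι : Bool → Fin 3 := (cond · 1 0)
  have hW : W.filter (· ≠ 2) = w.map ι := hf.filter_eq_map rfl
  have hprefix : W.takeWhile (· ≠ 2) <+: w.map ι := by
    have hself : (W.takeWhile (· ≠ 2)).filter (· ≠ 2) = W.takeWhile (· ≠ 2) :=
      List.filter_eq_self.2 fun _ => List.mem_takeWhile_imp
    rw [← hW, ← hself]
    exact (List.takeWhile_prefix _).filter _
  obtain ⟨v, hvw, hv⟩ := List.prefix_map_iff.1 hprefix
  have hcount : ∀ b, v.count b = (w.takeWhile (! ·)).length := fun b => by
    rw [← List.count_map_of_injective v ι (by decide), ← hv, hw, ← hf.count_takeWhile_ne_two b]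
  have hblock := eq_replicate_append_replicate_of_isPrefix
    (takeWhile_not_eq_replicate w ▸ List.takeWhile_prefix _) hvw hcount
  simpa [stretch, ← hblock] using hvw

theorem exists_false_block_isPrefix {w : List Bool} (hf : NFE f)
    (h : f Bool [false, true] = false :: w) :
    ∃ m, block (false, m) Bool [false, true] <+: f Bool [false, true] :=
  ⟨(w.takeWhile (! ·)).length, by simpa [h, block] using hf.stretch_isPrefix_bool⟩

theorem exists_block_isPrefix (hf : NFE f) (h : f Bool [false, true] ≠ []) :
    ∃ q, block q Bool [false, true] <+: f Bool [false, true] := by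
  obtain ⟨b, w, hw⟩ := List.exists_cons_of_ne_nil h
  cases b with
  | false =>
    obtain ⟨m, hm⟩ := hf.exists_false_block_isPrefix hw
    exact ⟨(false, m), hm⟩
  | true =>
    have hrev : f Bool [true, false] = (f Bool [false, true]).map (! ·) :=
      hf.1 _ _ (! ·) [false, true]
    obtain ⟨m, hm⟩ := hf.comp_reverse.exists_false_block_isPrefix (w := w.map (! ·))
      (by simp [hrev, hw])
    refine ⟨(true, m), ?_⟩
    simpa [hrev, Function.comp_def, block_bool] using hm.map (! ·)

theorem exists_ofBlocks_eq (hf : NFE f) : ∃ c, ofBlocks c = f := by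
  induction hn : (f Bool [false, true]).length using Nat.strong_induction_on generalizing f with
  | _ n ih =>
  by_cases hnil : f Bool [false, true] = []
  · refine ⟨[], ?_⟩
    funext α xs
    exact (List.prefix_nil.1 (hf.isPrefix_of_isPrefix_bool nil (by simp [hnil]) α xs)).symm
  · obtain ⟨q, hq⟩ := hf.exists_block_isPrefix hnil
    obtain ⟨r, hr, hfr⟩ := hf.exists_append_of_isPrefix (nfe_block q)
      ((nfe_block q).isPrefix_of_isPrefix_bool hf hq)
    have hlt : (r Bool [false, true]).length < n := by
      rw [← hn, hfr, List.length_append, block_bool]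
      simp
    obtain ⟨c, rfl⟩ := ih _ hlt hr rfl
    exact ⟨q :: c, by funext α xs; exact (hfr α xs).symm⟩

/-- A sequence of blocks of total multiplicity at least two arises in a unique way from one of total
multiplicity one less: by prepending a block of multiplicity one and given direction (`some b`), or
by raising the multiplicity of the first block (`none`). -/
def growEquiv (k : ℕ) : Option Bool × {c // size c = k + 1} ≃ {c // size c = k + 2} where
  toFun
    | (some b, ⟨c, h⟩) => ⟨(b, 0) :: c, by simp only [size_cons] at h ⊢; omega⟩
    | (none, ⟨(b, m) :: c, h⟩) => ⟨(b, m + 1) :: c, by simp only [size_cons] at h ⊢; omega⟩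
    | (none, ⟨[], h⟩) => absurd h (by simp [size])
  invFun
    | ⟨(b, 0) :: c, h⟩ => (some b, ⟨c, by simp only [size_cons] at h ⊢; omega⟩)
    | ⟨(b, m + 1) :: c, h⟩ => (none, ⟨(b, m) :: c, by simp only [size_cons] at h ⊢; omega⟩)
    | ⟨[], h⟩ => absurd h (by simp [size])
  left_inv := by
    rintro ⟨_ | b, ⟨_ | ⟨⟨b, m⟩, c⟩, h⟩⟩
    · simp [size] at h
    all_goals rfl
  right_inv := by
    rintro ⟨_ | ⟨⟨b, _ | m⟩, c⟩, h⟩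
    · simp [size] at h
    all_goals rfl

theorem size_eq_one_iff {c : List (Bool × ℕ)} : size c = 1 ↔ ∃ b, [(b, 0)] = c := by
  rcases c with _ | ⟨⟨b, m⟩, _ | ⟨⟨b', m'⟩, c⟩⟩ <;> simp [size] <;> omega

theorem card_size_eq (k : ℕ) : Nat.card {c // size c = k + 1} = 2 * 3 ^ k := by
  induction k with
  | zero =>
    have hinj : Function.Injective fun b : Bool => [(b, 0)] := fun b b' h => by simpa using h
    simp only [zero_add, size_eq_one_iff]
    exact (Nat.card_range_of_injective hinj).trans (by simp)
  | succ k ih =>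
    rw [← Nat.card_congr (growEquiv k), Nat.card_prod, ih, Nat.card_eq_fintype_card,
      Fintype.card_option, Fintype.card_bool]
    ring

end NFE

theorem card_k_nfe (k : ℕ) (hk : 1 ≤ k) :
    Nat.card {f : ∀ α : Type, List α → List α // NFE f ∧ (f Unit [()]).length = k} =
      2 * 3 ^ (k - 1) := by
  obtain ⟨k, rfl⟩ := Nat.exists_eq_add_of_le' hk
  rw [Nat.add_sub_cancel, ← NFE.card_size_eq k]
  symm
  refine Nat.card_eq_of_bijective
    (fun c => ⟨NFE.ofBlocks c.1, NFE.nfe_ofBlocks c.1,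
      (NFE.length_ofBlocks_unit c.1).trans c.2⟩) ⟨fun c c' h => ?_, ?_⟩
  · exact Subtype.ext (NFE.ofBlocks_bool_injective
      (congrFun₂ (congrArg Subtype.val h) Bool [false, true]))
  · rintro ⟨f, hf, hlen⟩
    obtain ⟨c, rfl⟩ := hf.exists_ofBlocks_eq
    exact ⟨⟨c, (NFE.length_ofBlocks_unit c).symm.trans hlen⟩, rfl⟩
end

section
/- Let f and g be natural filter-equivariant polymorphic list functions. If f and g agree on a single length-two list with distinct entries — say f Bool [true, false] = g Bool [true, false] — then f = g, i.e. f α xs = g α xs for every type α and every list xs : List α. In particular, a natural filter-equivariant function is fully determined by its value on one length-two example. -/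
/-!
Every list is the image under a map of the duplicate-free list of its positions, so by naturality
it suffices to compare `f` and `g` on duplicate-free lists. Any list is determined by its
restrictions to the sets `{a, b}`; filter-equivariance commutes these restrictions past `f` and `g`,
and a duplicate-free list restricted to `{a, b}` has length at most two. Finally,
filter-equivariance forces `f [] = []`, and every nonempty list of length at most two is obtained
from `[a, b]`, where `a ≠ b`, by filtering and mapping.
-/

theorem eq_of_forall_filter_mem_pair_eq {α : Type*} [DecidableEq α] {u v : List α}
    (h : ∀ a b : α, u.filter (· ∈ [a, b]) = v.filter (· ∈ [a, b])) : u = v := by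
  induction u generalizing v with
  | nil =>
    cases v with
    | nil => rfl
    | cons b v => simpa using h b b
  | cons a u ih =>
    cases v with
    | nil => simpa using h a a
    | cons b v =>
      obtain rfl : a = b := by
        have heads := congrArg List.head? (h a b)
        simpa using heads
      have tails : u = v := ih fun c d =>
        List.append_cancel_left (as := [a].filter (· ∈ [c, d])) <| by
          rw [← List.filter_append, ← List.filter_append]
          exact h c d
      rw [tails]

theorem length_filter_mem_le_of_nodup {α : Type*} [DecidableEq α] {l : List α} (hl : l.Nodup)
    (s : List α) : (l.filter (· ∈ s)).length ≤ s.length := by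
  have filter_subset : l.filter (· ∈ s) ⊆ s := fun x hx => by
    simpa using (List.mem_filter.mp hx).2
  exact ((hl.filter _).subperm filter_subset).length_le

namespace FilterEquivariant

variable {α : Type} {f g : List α → List α}

theorem apply_nil (hf : FilterEquivariant f) : f [] = [] := by
  simpa using hf (fun _ => false) []

theorem apply_filter_eq (hf : FilterEquivariant f) (hg : FilterEquivariant g) {xs : List α}
    (h : f xs = g xs) (p : α → Bool) : f (xs.filter p) = g (xs.filter p) := by
  rw [hf, hg, h]

theorem apply_eq_of_nodup (hf : FilterEquivariant f) (hg : FilterEquivariant g)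
    (h : ∀ xs : List α, xs.length ≤ 2 → f xs = g xs) {xs : List α} (hxs : xs.Nodup) :
    f xs = g xs := by
  classical
  refine eq_of_forall_filter_mem_pair_eq fun a b => ?_
  rw [← hf, ← hg]
  exact h _ (length_filter_mem_le_of_nodup hxs [a, b])

end FilterEquivariant

namespace Natural

variable {f g : ∀ α : Type, List α → List α}

theorem apply_map_eq (hf : Natural f) (hg : Natural g) {α β : Type} {xs : List α}
    (h : f α xs = g α xs) (φ : α → β) : f β (xs.map φ) = g β (xs.map φ) := by
  rw [hf, hg, h]

theorem apply_eq_of_forall_nodup (hf : Natural f) (hg : Natural g)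
    (h : ∀ (α : Type) (xs : List α), xs.Nodup → f α xs = g α xs) (α : Type) (xs : List α) :
    f α xs = g α xs := by
  have positions := h _ _ (List.nodup_finRange xs.length)
  simpa only [List.map_get_finRange] using hf.apply_map_eq hg positions xs.get

end Natural

theorem NFE.apply_eq_of_length_le_two {f g : ∀ α : Type, List α → List α} (hf : NFE f) (hg : NFE g)
    {β : Type} {a b : β} (hab : a ≠ b) (h : f β [a, b] = g β [a, b]) {α : Type} (xs : List α)
    (hxs : xs.length ≤ 2) : f α xs = g α xs := by
  classical
  match xs, hxs with
  | [], _ => rw [(hf.2 α).apply_nil, (hg.2 α).apply_nil]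
  | [c], _ =>
    have singleton : f β [a] = g β [a] := by
      simpa [hab.symm] using (hf.2 β).apply_filter_eq (hg.2 β) h (· = a)
    exact hf.1.apply_map_eq hg.1 singleton fun _ => c
  | [c, d], _ =>
    simpa [hab.symm] using hf.1.apply_map_eq hg.1 h fun x => if x = a then c else d

theorem nfe_determined_by_one_length_two_example_general
    {f g : ∀ α : Type, List α → List α} (hf : NFE f) (hg : NFE g)
    {β : Type} {a b : β} (hab : a ≠ b) (h : f β [a, b] = g β [a, b]) :
    ∀ (α : Type) (xs : List α), f α xs = g α xs :=
  hf.1.apply_eq_of_forall_nodup hg.1 fun α _ hxs =>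
    (hf.2 α).apply_eq_of_nodup (hg.2 α) (hf.apply_eq_of_length_le_two hg hab h) hxs

theorem nfe_determined_by_one_length_two_example
    (f g : ∀ α : Type, List α → List α) (hf : NFE f) (hg : NFE g)
    (h : f Bool [true, false] = g Bool [true, false]) :
    ∀ (α : Type) (xs : List α), f α xs = g α xs :=
  nfe_determined_by_one_length_two_example_general hf hg (by decide) h
end
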